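/- arXiv:math/0601545 — 2 statements merged into one kernel-verified Lean document; each statement's English description precedes it below -/
import Mathlib

section
/- Let μ be a linear form on Pol^d(Z_p, L) with r − 1 < d. Then μ extends to a continuous linear form on C^r(Z_p, L) if and only if there exists a constant C such that |∫_{a+p^n Z_p} (z−a)^j dμ(z)| ≤ |C|·p^{-n(j−r)} for all a ∈ Z_p, all 0 ≤ j ≤ d, and all n ∈ N (Amice–Vélu/Vishik criterion for tempered distributions of order r). -/
/-!
Write `T` for the shift `f ↦ f(· + 1)` and `X = T - 1`, so that `ℤ[X]` acts on functions on `ℤ_p` and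
`a_k(f) = (X^k f)(0)`. The difference of step `pⁿ` is the action of `(1+X)^{pⁿ} - 1`. Both directions
come from comparing this polynomial with `X`.

If `μ` is bounded for `‖·‖_r`, it suffices to bound `‖f‖_r` for `f = 1_{a+pⁿℤ_p} (z-a)^j`. Such an
`f` is killed by `((1+X)^{pⁿ} - 1)^{d+1}`. As `X^{pⁿ}` agrees with `(1+X)^{pⁿ} - 1` modulo `p`, modulo
that operator `X^{m pⁿ}` is divisible by `p^{m-d}` (`X_pow_mem`). So `a_k(f)` decays geometrically in
`⌊k/pⁿ⌋`, and `‖f‖_r ≤ K p^{nr} sup |f| ≤ K p^{nr-nj}` (`exists_coeff_bound`).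

Conversely, assume the moment condition. Let `interp d n f` be the function which on each coset of
`pⁿℤ_p` is the polynomial of degree at most `d` interpolating `f` at `a, a + pⁿ, …, a + d pⁿ`, where
`0 ≤ a < pⁿ`. It only involves values of `f` on `ℕ`, and it equals `f` once `f` is locally polynomial
of level `n` (`interp_eq_self`). The coefficients of `(1+X)^m ((1+X)^{pⁿ} - 1)^{d+1}` are at most
`min(1, (k/pⁿ)^{d+1})`, because `|C(pⁿ, k)| ≤ k/pⁿ`. Since `r < d + 1`, this gives
`|Δ^{d+1} f(m)| ≤ ‖f‖_r p^{-nr}` for step `pⁿ` (`norm_fwdDiff_natCast_le`), and by Newton's formula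
the same bound holds for `f - interp d n f` on `ℕ` (`norm_sub_interp_le`). On the other hand the
moment condition says that `|μ(interp d n g)|` is at most a constant times `p^{nr} sup_ℕ |g|`
(`exists_norm_interp_le`). Applied at level `n + 1` to `g = f - interp d n f`, this bounds
`μ(interp d (n+1) f) - μ(interp d n f)` by a constant times `‖f‖_r`, independently of `n`. The norm
is nonarchimedean, so the telescoping sum obeys the same bound, and at the level of `f` it is `μ(f)`.
-/


open Filter

/-- The Mahler coefficients `a_n(f) = Σ_{i=0}^n (−1)^i C(n,i) f(n−i)`. -/
noncomputable def mahlerCoeff {p : ℕ} [Fact p.Prime] {L : Type*} [NormedField L]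
    (f : ℤ_[p] → L) (n : ℕ) : L :=
  ∑ i ∈ Finset.range (n + 1), (-1) ^ i * (n.choose i : L) * f ((n - i : ℕ) : ℤ_[p])

/-- The norm `‖f‖_r = sup_n (n+1)^r |a_n(f)|` on `C^r(ℤ_p, L)`. -/
noncomputable def crNorm {p : ℕ} [Fact p.Prime] {L : Type*} [NormedField L]
    (r : ℝ) (f : ℤ_[p] → L) : ℝ :=
  ⨆ n : ℕ, ((n : ℝ) + 1) ^ r * ‖mahlerCoeff f n‖

/-- The embedding `ℤ_p → L`. -/
noncomputable def embL (p : ℕ) [Fact p.Prime] (L : Type*) [NormedField L]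
    [NormedAlgebra ℚ_[p] L] (z : ℤ_[p]) : L :=
  algebraMap ℚ_[p] L (z : ℚ_[p])

/-- `f` is locally polynomial of local degree at most `d`. -/
def IsLocPoly (p : ℕ) [Fact p.Prime] (L : Type*) [NormedField L]
    [NormedAlgebra ℚ_[p] L] (d : ℕ) (f : ℤ_[p] → L) : Prop :=
  ∃ N : ℕ, ∀ a : ℤ_[p], ∃ P : Polynomial L, P.natDegree ≤ d ∧
    ∀ t : ℤ_[p], f (a + (p : ℤ_[p]) ^ N * t) =
      P.eval (embL p L (a + (p : ℤ_[p]) ^ N * t))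

/-- The function `z ↦ 1_{a + p^n ℤ_p}(z) · (z−a)^j`, whose integral against `μ` is the
moment `∫_{a+p^n ℤ_p} (z−a)^j dμ(z)`. -/
noncomputable def cosetMoment (p : ℕ) [Fact p.Prime] (L : Type*) [NormedField L]
    [NormedAlgebra ℚ_[p] L] (a : ℤ_[p]) (n j : ℕ) : ℤ_[p] → L :=
  Set.indicator {z : ℤ_[p] | ∃ t : ℤ_[p], z = a + (p : ℤ_[p]) ^ n * t}
    (fun z => (embL p L (z - a)) ^ j)

namespace AmiceVeluVishik

-- In `Δ_[h] ^[j]` the blank keeps `]^` from being read as one token.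
open Polynomial fwdDiff

/-! ### Difference operators as a `ℤ[X]`-action -/

section Operators

variable {p : ℕ} [Fact p.Prime] {L : Type*} [NormedField L]

variable (p L) in
/-- The action of `ℤ[X]` on functions on `ℤ_p` in which `X` acts as the difference operator
`f ↦ f(· + 1) - f`. -/
noncomputable def diffAct : ℤ[X] →ₐ[ℤ] Module.End ℤ (ℤ_[p] → L) :=
  aeval (fwdDiff_aux.fwdDiffₗ ℤ_[p] L 1)

lemma diffAct_X_pow (k : ℕ) (f : ℤ_[p] → L) : diffAct p L (X ^ k) f = Δ_[1] ^[k] f := by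
  rw [diffAct, map_pow, aeval_X, fwdDiff_aux.coe_fwdDiffₗ_pow]

lemma diffAct_one_add_X_pow (m : ℕ) (f : ℤ_[p] → L) (x : ℤ_[p]) :
    diffAct p L ((1 + X) ^ m) f x = f (x + m) := by
  have : diffAct p L (1 + X) = fwdDiff_aux.shiftₗ ℤ_[p] L 1 := by
    rw [map_add, map_one, diffAct, aeval_X, fwdDiff_aux.shiftₗ, add_comm]
  rw [map_pow, this, fwdDiff_aux.shiftₗ_pow_apply, nsmul_one]

lemma diffAct_shift_sub_one (q : ℕ) :
    diffAct p L ((1 + X) ^ q - 1) = fwdDiff_aux.fwdDiffₗ ℤ_[p] L (q : ℤ_[p]) := by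
  ext f x
  rw [map_sub, map_one, LinearMap.sub_apply, Pi.sub_apply, diffAct_one_add_X_pow]
  rfl

lemma diffAct_shift_sub_one_pow (q j : ℕ) (f : ℤ_[p] → L) :
    diffAct p L (((1 + X) ^ q - 1) ^ j) f = Δ_[(q : ℤ_[p])] ^[j] f := by
  rw [map_pow, diffAct_shift_sub_one, fwdDiff_aux.coe_fwdDiffₗ_pow]

lemma mahlerCoeff_eq (f : ℤ_[p] → L) (k : ℕ) : mahlerCoeff f k = Δ_[1] ^[k] f 0 := by
  rw [mahlerCoeff, fwdDiff_iter_eq_sum_shift, ← Finset.sum_range_reflect]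
  refine Finset.sum_congr rfl fun i hi => ?_
  have hi' : i ≤ k := Nat.lt_succ_iff.mp (Finset.mem_range.mp hi)
  rw [show k + 1 - 1 - i = k - i by omega, show k - (k - i) = i by omega, Nat.choose_symm hi']
  simp

lemma diffAct_apply_zero (P : ℤ[X]) (f : ℤ_[p] → L) :
    diffAct p L P f 0 = ∑ k ∈ P.support, (P.coeff k : L) * mahlerCoeff f k := by
  conv_lhs => rw [P.as_sum_support]
  rw [map_sum, LinearMap.sum_apply, Finset.sum_apply]
  refine Finset.sum_congr rfl fun k _ => ?_
  rw [← smul_X_eq_monomial, map_smul, LinearMap.smul_apply, diffAct_X_pow, Pi.smul_apply,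
    mahlerCoeff_eq, zsmul_eq_mul]

end Operators

/-! ### Norm estimates for differences and Mahler coefficients -/

section Estimates

lemma norm_intCast_eq {L : Type*} [NormedField L] (p : ℕ) [Fact p.Prime]
    [NormedAlgebra ℚ_[p] L] (c : ℤ) : ‖(c : L)‖ = ‖(c : ℚ_[p])‖ := by
  rw [← norm_algebraMap' L (c : ℚ_[p]), map_intCast]

lemma norm_intCast_le_one {L : Type*} [NormedField L] (p : ℕ) [Fact p.Prime]
    [NormedAlgebra ℚ_[p] L] (c : ℤ) : ‖(c : L)‖ ≤ 1 := by
  rw [norm_intCast_eq p]; exact Padic.norm_int_le_one c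

lemma norm_natCast_le_one {L : Type*} [NormedField L] (p : ℕ) [Fact p.Prime]
    [NormedAlgebra ℚ_[p] L] (c : ℕ) : ‖(c : L)‖ ≤ 1 := by
  simpa using norm_intCast_le_one p (L := L) c

/-- A norm extending the `p`-adic one is nonarchimedean, since integers have norm at most `1`. -/
lemma isUltrametricDist (L : Type*) [NormedField L] (p : ℕ) [Fact p.Prime]
    [NormedAlgebra ℚ_[p] L] : IsUltrametricDist L :=
  IsUltrametricDist.isUltrametricDist_of_forall_norm_natCast_le_one (norm_natCast_le_one p)

lemma norm_p_pow (L : Type*) [NormedField L] (p : ℕ) [Fact p.Prime]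
    [NormedAlgebra ℚ_[p] L] (n : ℕ) : ‖((p : L)) ^ n‖ = ((p : ℝ) ^ n)⁻¹ := by
  have := norm_intCast_eq p (L := L) p
  rw [norm_pow]
  simp only [Int.cast_natCast] at this
  rw [this, Padic.norm_p, inv_pow]

lemma inv_le_norm_natCast (L : Type*) [NormedField L] (p : ℕ) [Fact p.Prime]
    [NormedAlgebra ℚ_[p] L] {k : ℕ} (hk : k ≠ 0) : (k : ℝ)⁻¹ ≤ ‖(k : L)‖ := by
  have h := norm_intCast_eq p (L := L) k
  have hp : 0 < p := (Fact.out : p.Prime).pos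
  simp only [Int.cast_natCast] at h
  rw [h]
  have := Padic.norm_eq_zpow_neg_valuation (p := p) (x := (k : ℚ_[p])) (by exact_mod_cast hk)
  rw [this, Padic.valuation_natCast, zpow_neg, zpow_natCast]
  have h2 : p ^ padicValNat p k ≤ k := Nat.le_of_dvd (Nat.pos_of_ne_zero hk) pow_padicValNat_dvd
  gcongr
  exact_mod_cast h2

/-- `|C(pⁿ, k)| ≤ k / pⁿ`, from `k C(pⁿ, k) = pⁿ C(pⁿ - 1, k - 1)`. -/
lemma norm_choose_le (L : Type*) [NormedField L] (p : ℕ) [Fact p.Prime]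
    [NormedAlgebra ℚ_[p] L] (n k : ℕ) (hk : k ≠ 0) :
    ‖(((p ^ n).choose k : ℕ) : L)‖ ≤ (k : ℝ) / (p : ℝ) ^ n := by
  obtain ⟨k, rfl⟩ := Nat.exists_eq_succ_of_ne_zero hk
  have hp : 0 < p := (Fact.out : p.Prime).pos
  have h := Nat.add_one_mul_choose_eq (p ^ n - 1) k
  rw [Nat.sub_add_cancel (Nat.pos_of_ne_zero (by positivity))] at h
  have h1 : ‖(((p ^ n).choose (k + 1) : ℕ) : L)‖ * ‖((k + 1 : ℕ) : L)‖ ≤ ((p : ℝ) ^ n)⁻¹ := by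
    rw [← norm_mul, ← Nat.cast_mul, ← h, Nat.cast_mul, norm_mul, Nat.cast_pow, norm_p_pow]
    exact mul_le_of_le_one_right (by positivity) (norm_natCast_le_one p _)
  have h2 := inv_le_norm_natCast L p hk
  have h3 : ‖(((p ^ n).choose (k + 1) : ℕ) : L)‖ * ((k + 1 : ℕ) : ℝ)⁻¹ ≤ ((p : ℝ) ^ n)⁻¹ :=
    (mul_le_mul_of_nonneg_left h2 (norm_nonneg _)).trans h1
  rw [← div_eq_mul_inv, div_le_iff₀ (by positivity)] at h3
  rw [div_eq_inv_mul]
  exact h3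

variable {p : ℕ} [Fact p.Prime] {L : Type*} [NormedField L] [NormedAlgebra ℚ_[p] L]
  [IsUltrametricDist L]

lemma norm_diffAct_le (P : ℤ[X]) (f : ℤ_[p] → L) (M : ℝ) (hf : ∀ x, ‖f x‖ ≤ M) (x : ℤ_[p]) :
    ‖diffAct p L P f x‖ ≤ M := by
  induction P using Polynomial.induction_on generalizing x with
  | C a =>
    rw [← algebraMap_eq, AlgHom.commutes, Module.algebraMap_end_apply, Pi.smul_apply,
      zsmul_eq_mul, norm_mul]
    exact (mul_le_of_le_one_left (norm_nonneg _) (norm_intCast_le_one p a)).trans (hf x)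
  | add P Q hP hQ =>
    rw [map_add, LinearMap.add_apply, Pi.add_apply]
    exact (IsUltrametricDist.norm_add_le_max _ _).trans (max_le (hP x) (hQ x))
  | monomial n a h =>
    rw [pow_succ, ← mul_assoc, mul_comm, map_mul, Module.End.mul_apply,
      ← pow_one (X : ℤ[X]), diffAct_X_pow, pow_one, Function.iterate_one, fwdDiff]
    rw [sub_eq_add_neg]
    refine (IsUltrametricDist.norm_add_le_max _ _).trans (max_le (h _) ?_)
    rw [norm_neg]
    exact h x

/-- An iterated difference of step `h` is bounded by the values along the progression it uses. -/
lemma norm_fwdDiff_iter_le (h y : ℤ_[p]) (f : ℤ_[p] → L) (M : ℝ)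
    (hf : ∀ i : ℕ, ‖f (y + i • h)‖ ≤ M) (j : ℕ) : ‖Δ_[h] ^[j] f y‖ ≤ M := by
  rw [fwdDiff_iter_eq_sum_shift]
  refine IsUltrametricDist.norm_sum_le_of_forall_le_of_nonneg
    ((norm_nonneg _).trans (hf 0)) fun i _ => ?_
  rw [zsmul_eq_mul, norm_mul]
  exact (mul_le_of_le_one_left (norm_nonneg _) (norm_intCast_le_one p _)).trans (hf i)

/-- The coefficients of `(1+X)^m ((1+X)^{pⁿ} - 1)^e` have norm at most `(k / pⁿ)^e`. -/
lemma norm_coeff_le (m n e k : ℕ) :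
    ‖((((1 + X) ^ m * ((1 + X) ^ (p ^ n) - 1) ^ e : ℤ[X]).coeff k : ℤ) : L)‖ ≤
      ((k : ℝ) / (p : ℝ) ^ n) ^ e := by
  have hp : (0 : ℝ) < p := by exact_mod_cast (Fact.out : p.Prime).pos
  induction e generalizing k with
  | zero => simpa using norm_intCast_le_one p (L := L) _
  | succ e ih =>
    rw [pow_succ ((1 + X) ^ (p ^ n) - 1 : ℤ[X]), ← mul_assoc, coeff_mul, Int.cast_sum]
    refine IsUltrametricDist.norm_sum_le_of_forall_le_of_nonneg (by positivity) fun ij hij => ?_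
    have hij' := Finset.HasAntidiagonal.mem_antidiagonal.mp hij
    rw [Int.cast_mul, norm_mul, pow_succ]
    refine mul_le_mul ((ih ij.1).trans ?_) ?_ (norm_nonneg _) (by positivity)
    · gcongr; omega
    · rw [coeff_sub, coeff_one_add_X_pow, coeff_one]
      rcases eq_or_ne ij.2 0 with h0 | h0
      · simp [h0]; positivity
      · rw [if_neg h0]
        simp only [sub_zero]
        have := norm_choose_le L p n ij.2 h0
        rw [← Int.cast_natCast] at this
        refine this.trans ?_
        gcongr; omega

/-- Modulo `((1+X)^{pⁿ} - 1)^{d+1}`, the power `(X^{pⁿ})^m` is divisible by `p^{m-d}` (truncated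
subtraction, so nothing is claimed for `m ≤ d`), because `X^{pⁿ}` is congruent to `(1+X)^{pⁿ} - 1`
modulo `p`. -/
lemma X_pow_mem (p : ℕ) [Fact p.Prime] (n d m : ℕ) :
    ((X : ℤ[X]) ^ p ^ n) ^ m ∈
      Ideal.span {(p : ℤ[X]) ^ (m - d), ((1 + X) ^ (p ^ n) - 1) ^ (d + 1)} := by
  rcases le_total m d with h | h
  · rw [Nat.sub_eq_zero_of_le h, pow_zero, (Ideal.eq_top_iff_one _).mpr
      (Ideal.subset_span (Set.mem_insert _ _))]
    trivial
  · obtain ⟨s, hs⟩ := exists_add_pow_prime_pow_eq (Fact.out : p.Prime) (1 : ℤ[X]) X n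
    have hX : (X : ℤ[X]) ^ p ^ n = (p : ℤ[X]) * -(X * s) + ((1 + X) ^ (p ^ n) - 1) := by
      rw [hs]; ring
    rw [hX]
    refine Ideal.add_pow_mem_of_pow_mem_of_le _ (m := m - d) (n := d + 1) ?_ ?_ ?_
    · rw [mul_pow]
      exact Ideal.mul_mem_right _ _ (Ideal.subset_span (Set.mem_insert _ _))
    · exact Ideal.subset_span (Set.mem_insert_of_mem _ rfl)
    · omega

/-- If `f` is killed by `d + 1` differences of step `pⁿ`, its Mahler coefficients decay
geometrically in `⌊k / pⁿ⌋`. -/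
lemma norm_mahlerCoeff_le (n d m k : ℕ) (f : ℤ_[p] → L) (M : ℝ) (hf : ∀ x, ‖f x‖ ≤ M)
    (hD : Δ_[((p ^ n : ℕ) : ℤ_[p])] ^[d + 1] f = 0) (hk : p ^ n * m ≤ k) :
    ‖mahlerCoeff f k‖ ≤ ((p : ℝ) ^ (m - d))⁻¹ * M := by
  obtain ⟨s, rfl⟩ := Nat.exists_eq_add_of_le hk
  obtain ⟨A, B, hAB⟩ := Ideal.mem_span_pair.mp (X_pow_mem p n d m)
  have h1 : (X : ℤ[X]) ^ (p ^ n * m + s) =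
      ((p : ℤ) ^ (m - d)) • (X ^ s * A) + (X ^ s * B) * ((1 + X) ^ (p ^ n) - 1) ^ (d + 1) := by
    rw [pow_add, pow_mul, ← hAB, zsmul_eq_mul]
    push_cast
    ring
  rw [mahlerCoeff_eq, ← diffAct_X_pow, h1, map_add, LinearMap.add_apply, map_mul _ (X ^ s * B),
    Module.End.mul_apply, diffAct_shift_sub_one_pow, hD, map_zero, add_zero, map_smul,
    LinearMap.smul_apply, Pi.smul_apply, zsmul_eq_mul, norm_mul, Int.cast_pow, Int.cast_natCast,
    norm_p_pow]
  gcongr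
  exact norm_diffAct_le _ f M hf 0

variable (p) in
lemma exists_growth_bound (r : ℝ) (d : ℕ) :
    ∃ K : ℝ, 0 ≤ K ∧ ∀ m : ℕ, ((m : ℝ) + 1) ^ r * ((p : ℝ) ^ (m - d))⁻¹ ≤ K := by
  have hp : 1 < (p : ℝ) := by exact_mod_cast (Fact.out : p.Prime).one_lt
  have ht := tendsto_pow_const_mul_const_pow_of_abs_lt_one ⌈r⌉₊ (r := (p : ℝ)⁻¹)
    (by rw [abs_of_pos (by positivity)]; exact inv_lt_one_of_one_lt₀ hp)
  obtain ⟨K, hK⟩ := (ht.bddAbove_range)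
  have hK' : ∀ m : ℕ, (m : ℝ) ^ ⌈r⌉₊ * (p : ℝ)⁻¹ ^ m ≤ K := fun m => hK ⟨m, rfl⟩
  refine ⟨K * p ^ (d + 1), ?_, fun m => ?_⟩
  · have := (by positivity : (0 : ℝ) ≤ (0 : ℕ) ^ ⌈r⌉₊ * (p : ℝ)⁻¹ ^ 0).trans (hK' 0)
    positivity
  have h1 : ((m : ℝ) + 1) ^ r ≤ ((m + 1 : ℕ) : ℝ) ^ ⌈r⌉₊ := by
    rw [← Real.rpow_natCast, Nat.cast_add_one]
    exact Real.rpow_le_rpow_of_exponent_le (by linarith [m.cast_nonneg (α := ℝ)]) (Nat.le_ceil r)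
  have h2 : ((p : ℝ) ^ (m - d))⁻¹ ≤ (p : ℝ)⁻¹ ^ (m + 1) * p ^ (d + 1) := by
    rw [inv_pow, ← div_eq_inv_mul, le_div_iff₀ (by positivity), ← div_eq_inv_mul,
      div_le_iff₀ (by positivity), ← pow_add]
    exact pow_le_pow_right₀ hp.le (by omega)
  calc _ ≤ ((m + 1 : ℕ) : ℝ) ^ ⌈r⌉₊ * ((p : ℝ)⁻¹ ^ (m + 1) * p ^ (d + 1)) := by gcongr
    _ = (((m + 1 : ℕ) : ℝ) ^ ⌈r⌉₊ * (p : ℝ)⁻¹ ^ (m + 1)) * p ^ (d + 1) := by ring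
    _ ≤ _ := by gcongr; exact hK' _

variable (p L) in
/-- Functions killed by `d + 1` differences of step `pⁿ` satisfy `‖f‖_r ≤ K pⁿʳ sup |f|`, with `K`
independent of `n` and `f`. -/
lemma exists_coeff_bound (r : ℝ) (hr : 0 ≤ r) (d : ℕ) :
    ∃ K : ℝ, 0 ≤ K ∧ ∀ (n : ℕ) (f : ℤ_[p] → L) (M : ℝ), (∀ x, ‖f x‖ ≤ M) →
      Δ_[((p ^ n : ℕ) : ℤ_[p])] ^[d + 1] f = 0 →
      ∀ k : ℕ, ((k : ℝ) + 1) ^ r * ‖mahlerCoeff f k‖ ≤ K * (((p : ℝ) ^ n) ^ r * M) := by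
  have hp : 0 < p := (Fact.out : p.Prime).pos
  obtain ⟨K, hK0, hK⟩ := exists_growth_bound p r d
  refine ⟨K, hK0, fun n f M hf hD k => ?_⟩
  have hM : 0 ≤ M := (norm_nonneg _).trans (hf 0)
  set m := k / p ^ n
  have h1 := norm_mahlerCoeff_le n d m k f M hf hD (Nat.mul_div_le k _)
  have h2 : (k : ℝ) + 1 ≤ (p : ℝ) ^ n * ((m : ℝ) + 1) := by
    have : k + 1 ≤ p ^ n * (m + 1) := Nat.lt_mul_div_succ k (by positivity)
    exact_mod_cast this
  have h3 : ((k : ℝ) + 1) ^ r ≤ ((p : ℝ) ^ n) ^ r * ((m : ℝ) + 1) ^ r := by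
    rw [← Real.mul_rpow (by positivity) (by positivity)]
    exact Real.rpow_le_rpow (by positivity) h2 hr
  calc _ ≤ (((p : ℝ) ^ n) ^ r * ((m : ℝ) + 1) ^ r) * (((p : ℝ) ^ (m - d))⁻¹ * M) := by gcongr
    _ = (((m : ℝ) + 1) ^ r * ((p : ℝ) ^ (m - d))⁻¹) * (((p : ℝ) ^ n) ^ r * M) := by ring
    _ ≤ _ := by gcongr; exact hK m

/-- The hypothesis `r < d + 1` is used here: for `f` of norm `‖f‖_r ≤ A`, differences of order `d + 1`
and step `pⁿ` are `O(p^{-nr})`. Expanding them in the Mahler coefficients, the `k`-th term is at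
most `A (k + 1)^{-r} min(1, (k / pⁿ)^{d+1})`. -/
lemma norm_fwdDiff_natCast_le (r A : ℝ) (hr : 0 ≤ r) (d : ℕ) (hd : r - 1 < d) (f : ℤ_[p] → L)
    (hA : ∀ k : ℕ, ((k : ℝ) + 1) ^ r * ‖mahlerCoeff f k‖ ≤ A) (n m : ℕ) :
    ‖Δ_[((p ^ n : ℕ) : ℤ_[p])] ^[d + 1] f m‖ ≤ A / ((p : ℝ) ^ n) ^ r := by
  have hp : (0 : ℝ) < p := by exact_mod_cast (Fact.out : p.Prime).pos
  have hA0 : 0 ≤ A := le_trans (by positivity) (hA 0)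
  have h1 : Δ_[((p ^ n : ℕ) : ℤ_[p])] ^[d + 1] f m =
      diffAct p L ((1 + X) ^ m * ((1 + X) ^ (p ^ n) - 1) ^ (d + 1)) f 0 := by
    rw [map_mul, Module.End.mul_apply, diffAct_one_add_X_pow, diffAct_shift_sub_one_pow, zero_add]
  rw [h1, diffAct_apply_zero]
  refine IsUltrametricDist.norm_sum_le_of_forall_le_of_nonneg (by positivity) fun k _ => ?_
  rw [norm_mul, le_div_iff₀ (by positivity)]
  set c := ‖((((1 + X) ^ m * ((1 + X) ^ (p ^ n) - 1) ^ (d + 1) : ℤ[X]).coeff k : ℤ) : L)‖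
  have hc1 : c ≤ 1 := norm_intCast_le_one p _
  have hc2 : c ≤ ((k : ℝ) / (p : ℝ) ^ n) ^ (d + 1) := norm_coeff_le m n (d + 1) k
  have hc : c ≤ (((k : ℝ) + 1) / (p : ℝ) ^ n) ^ r := by
    rcases le_total (((k : ℝ) + 1) / (p : ℝ) ^ n) 1 with h | h
    · calc c ≤ ((k : ℝ) / (p : ℝ) ^ n) ^ (d + 1) := hc2
        _ ≤ (((k : ℝ) + 1) / (p : ℝ) ^ n) ^ (d + 1) := by gcongr; linarith
        _ = (((k : ℝ) + 1) / (p : ℝ) ^ n) ^ (((d + 1 : ℕ) : ℝ)) := (Real.rpow_natCast _ _).symm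
        _ ≤ _ := Real.rpow_le_rpow_of_exponent_ge (by positivity) h (by push_cast; linarith)
    · exact hc1.trans (Real.one_le_rpow h hr)
  rw [Real.div_rpow (by positivity) (by positivity), le_div_iff₀ (by positivity)] at hc
  calc c * ‖mahlerCoeff f k‖ * ((p : ℝ) ^ n) ^ r
      = (c * ((p : ℝ) ^ n) ^ r) * ‖mahlerCoeff f k‖ := by ring
    _ ≤ ((k : ℝ) + 1) ^ r * ‖mahlerCoeff f k‖ := by gcongr
    _ ≤ A := hA k

/-- Newton's formula bounds `|f|` on `ℕ` by `‖f‖_r`. -/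
lemma norm_natCast_apply_le (r A : ℝ) (hr : 0 ≤ r) (f : ℤ_[p] → L)
    (hA : ∀ k : ℕ, ((k : ℝ) + 1) ^ r * ‖mahlerCoeff f k‖ ≤ A) (m : ℕ) : ‖f m‖ ≤ A := by
  have hA0 : 0 ≤ A := le_trans (by positivity) (hA 0)
  have h := diffAct_one_add_X_pow m f 0
  rw [zero_add] at h
  rw [← h, diffAct_apply_zero]
  refine IsUltrametricDist.norm_sum_le_of_forall_le_of_nonneg hA0 fun k _ => ?_
  rw [norm_mul]
  refine (mul_le_of_le_one_left (norm_nonneg _) (norm_intCast_le_one p _)).trans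
    (le_trans (le_mul_of_one_le_left (norm_nonneg _) ?_) (hA k))
  exact Real.one_le_rpow (by linarith [k.cast_nonneg (α := ℝ)]) hr

end Estimates

/-! ### Local polynomials and local Newton interpolation -/

section Interpolation

variable {p : ℕ} [Fact p.Prime] {L : Type*} [NormedField L] [NormedAlgebra ℚ_[p] L]

variable (p L) in
/-- `embL` as a ring homomorphism. -/
noncomputable def embHom : ℤ_[p] →+* L := (algebraMap ℚ_[p] L).comp PadicInt.Coe.ringHom

lemma embL_eq (z : ℤ_[p]) : embL p L z = embHom p L z := rfl

lemma norm_embHom (z : ℤ_[p]) : ‖embHom p L z‖ = ‖z‖ := by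
  rw [← embL_eq, embL, norm_algebraMap', PadicInt.norm_def]

lemma continuous_embHom : Continuous (embHom p L) :=
  (continuous_algebraMap ℚ_[p] L).comp continuous_subtype_val

variable (p L) in
lemma p_pow_ne_zero (n : ℕ) : (p : L) ^ n ≠ 0 := by
  have hp : (0 : ℝ) < p := by exact_mod_cast (Fact.out : p.Prime).pos
  rw [← norm_ne_zero_iff, norm_p_pow]; positivity

lemma natCast_ne_zero (L : Type*) [NormedField L] (p : ℕ) [Fact p.Prime] [NormedAlgebra ℚ_[p] L]
    {k : ℕ} (hk : k ≠ 0) : (k : L) ≠ 0 := by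
  rw [← norm_pos_iff]
  exact lt_of_lt_of_le (by positivity) (inv_le_norm_natCast L p hk)

variable (p L) in
/-- Functions that are polynomial of degree at most `d` on each coset of `p^N ℤ_p`. -/
def locPoly (N d : ℕ) : Submodule L (ℤ_[p] → L) where
  carrier := {f | ∀ a : ℤ_[p], ∃ P : L[X], P.natDegree ≤ d ∧
    ∀ t : ℤ_[p], f (a + (p : ℤ_[p]) ^ N * t) = P.eval (embL p L (a + (p : ℤ_[p]) ^ N * t))}
  zero_mem' := fun a => ⟨0, by simp, by simp⟩
  add_mem' := fun {f g} hf hg a => by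
    obtain ⟨P, hP, hf⟩ := hf a
    obtain ⟨Q, hQ, hg⟩ := hg a
    exact ⟨P + Q, (natDegree_add_le _ _).trans (max_le hP hQ), fun t => by simp [hf t, hg t]⟩
  smul_mem' := fun c f hf a => by
    obtain ⟨P, hP, hf⟩ := hf a
    exact ⟨c • P, (natDegree_smul_le _ _).trans hP, fun t => by simp [hf t]⟩

lemma isLocPoly_iff (d : ℕ) (f : ℤ_[p] → L) : IsLocPoly p L d f ↔ ∃ N, f ∈ locPoly p L N d :=
  Iff.rfl

lemma locPoly_succ (N d : ℕ) (f : ℤ_[p] → L) (hf : f ∈ locPoly p L N d) :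
    f ∈ locPoly p L (N + 1) d := by
  intro a
  obtain ⟨P, hP, h⟩ := hf a
  refine ⟨P, hP, fun t => ?_⟩
  have := h (p * t)
  rwa [← mul_assoc, ← pow_succ] at this

/-- In the coordinate `t` of a coset `a + p^N ℤ_p`, a locally polynomial function is polynomial. -/
lemma exists_poly_coord {N d : ℕ} {f : ℤ_[p] → L} (hf : f ∈ locPoly p L N d) (a : ℤ_[p]) :
    ∃ Q : L[X], Q.natDegree ≤ d ∧
      ∀ t : ℤ_[p], f (a + (p : ℤ_[p]) ^ N * t) = Q.eval (embHom p L t) := by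
  obtain ⟨P, hP, h⟩ := hf a
  refine ⟨P.comp (C (embHom p L a) + C ((p : L) ^ N) * X), ?_, fun t => ?_⟩
  · refine natDegree_comp_le.trans ?_
    have : (C (embHom p L a) + C ((p : L) ^ N) * X).natDegree ≤ 1 := by
      rw [add_comm]; exact natDegree_linear_le
    calc _ ≤ P.natDegree * 1 := Nat.mul_le_mul_left _ this
      _ ≤ d := by simpa using hP
  · rw [h t, embL_eq]
    simp [eval_comp]

/-- Every coset of `pⁿ ℤ_p` has a representative in `{0, …, pⁿ - 1}`. -/
lemma exists_coset (z : ℤ_[p]) (n : ℕ) :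
    ∃ a t, a < p ^ n ∧ z = ((a : ℕ) : ℤ_[p]) + (p : ℤ_[p]) ^ n * t := by
  obtain ⟨t, ht⟩ := Ideal.mem_span_singleton.mp (PadicInt.appr_spec n z)
  exact ⟨z.appr n, t, PadicInt.appr_lt z n, by rw [← ht]; ring⟩

/-- A locally polynomial function is bounded. -/
lemma exists_bound {N d : ℕ} {f : ℤ_[p] → L} (hf : f ∈ locPoly p L N d) :
    ∃ M, ∀ z, ‖f z‖ ≤ M := by
  have h (a : ℕ) : ∃ M, ∀ t : ℤ_[p], ‖f (a + (p : ℤ_[p]) ^ N * t)‖ ≤ M := by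
    obtain ⟨Q, -, hQ⟩ := exists_poly_coord hf a
    obtain ⟨M, hM⟩ := isCompact_univ.exists_bound_of_continuousOn
      (Q.continuous.comp (continuous_embHom (p := p))).continuousOn
    exact ⟨M, fun t => by rw [hQ]; exact hM t trivial⟩
  choose M hM using h
  refine ⟨∑ a ∈ Finset.range (p ^ N), M a, fun z => ?_⟩
  obtain ⟨a, t, ha, rfl⟩ := exists_coset z N
  exact (hM a t).trans (Finset.single_le_sum (f := M)
    (fun i _ => (norm_nonneg _).trans (hM i 0)) (Finset.mem_range.mpr ha))

lemma fwdDiff_eq_of_coord {N : ℕ} {f : ℤ_[p] → L} {a : ℤ_[p]} {Q : L[X]}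
    (hQ : ∀ t : ℤ_[p], f (a + (p : ℤ_[p]) ^ N * t) = Q.eval (embHom p L t)) (j : ℕ) :
    Δ_[((p ^ N : ℕ) : ℤ_[p])] ^[j] f a = Δ_[1] ^[j] Q.eval 0 := by
  rw [fwdDiff_iter_eq_sum_shift, fwdDiff_iter_eq_sum_shift]
  refine Finset.sum_congr rfl fun i _ => ?_
  have := hQ i
  rw [nsmul_eq_mul, mul_comm (i : ℤ_[p]), Nat.cast_pow, this]
  simp

lemma fwdDiff_locPoly_eq_zero {N d : ℕ} {f : ℤ_[p] → L} (hf : f ∈ locPoly p L N d) :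
    Δ_[((p ^ N : ℕ) : ℤ_[p])] ^[d + 1] f = 0 := by
  ext a
  obtain ⟨Q, hQd, hQ⟩ := exists_poly_coord hf a
  rw [fwdDiff_eq_of_coord hQ, fwdDiff_iter_eq_zero_of_degree_lt (Nat.lt_succ_of_le hQd)]
  rfl

/-- The binomial polynomial `C(X, j)` over `L`. -/
noncomputable def binomPoly (L : Type*) [NormedField L] (j : ℕ) : L[X] :=
  C ((j.factorial : L)⁻¹) * descPochhammer L j

lemma natDegree_binomPoly_le (j : ℕ) : (binomPoly L j).natDegree ≤ j :=
  (natDegree_C_mul_le _ _).trans (descPochhammer_natDegree L j).le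

lemma binomPoly_eval_natCast {L : Type*} [NormedField L] (p : ℕ) [Fact p.Prime]
    [NormedAlgebra ℚ_[p] L] (j m : ℕ) : (binomPoly L j).eval (m : L) = m.choose j := by
  have h : (j.factorial : L) ≠ 0 := natCast_ne_zero L p (Nat.factorial_ne_zero j)
  rw [binomPoly, eval_mul, eval_C, descPochhammer_eval_eq_descFactorial,
    Nat.descFactorial_eq_factorial_mul_choose, Nat.cast_mul, inv_mul_cancel_left₀ h]

/-- Newton interpolation is exact on polynomials of degree at most `d`. -/
lemma eval_eq_newton {L : Type*} [NormedField L] (p : ℕ) [Fact p.Prime] [NormedAlgebra ℚ_[p] L]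
    (Q : L[X]) (d : ℕ) (hQ : Q.natDegree ≤ d) (x : L) :
    Q.eval x = ∑ j ∈ Finset.range (d + 1), Δ_[1] ^[j] Q.eval 0 * (binomPoly L j).eval x := by
  suffices h : Q = ∑ j ∈ Finset.range (d + 1), C (Δ_[1] ^[j] Q.eval 0) * binomPoly L j by
    conv_lhs => rw [h]
    simp [eval_finsetSum]
  have : CharZero L := charZero_of_injective_algebraMap (algebraMap ℚ_[p] L).injective
  refine eq_of_infinite_eval_eq _ _ (Set.infinite_of_injective_forall_mem
    (Nat.cast_injective (R := L)) fun m => ?_)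
  have h1 := shift_eq_sum_fwdDiff_iter (1 : L) Q.eval m 0
  simp only [Set.mem_ofPred_eq, eval_finsetSum, eval_mul, eval_C, binomPoly_eval_natCast p]
  rw [zero_add, nsmul_one] at h1
  rw [h1]
  -- Both sums can be extended to `range (m + d + 1)`: beyond `m` the binomials vanish, beyond `d`
  -- the differences do.
  have e1 : ∑ k ∈ Finset.range (m + 1), m.choose k • Δ_[1] ^[k] Q.eval 0 =
      ∑ k ∈ Finset.range (m + d + 1), m.choose k • Δ_[1] ^[k] Q.eval 0 := by
    refine Finset.sum_subset (Finset.range_subset_range.mpr (by omega)) fun k _ hk => ?_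
    rw [Nat.choose_eq_zero_of_lt (by rw [Finset.mem_range] at hk; omega), zero_smul]
  have e2 : ∑ k ∈ Finset.range (d + 1), Δ_[1] ^[k] Q.eval 0 * (m.choose k : L) =
      ∑ k ∈ Finset.range (m + d + 1), Δ_[1] ^[k] Q.eval 0 * (m.choose k : L) := by
    refine Finset.sum_subset (Finset.range_subset_range.mpr (by omega)) fun k _ hk => ?_
    rw [fwdDiff_iter_eq_zero_of_degree_lt (by rw [Finset.mem_range] at hk; omega), Pi.zero_apply, zero_mul]
  rw [e1, e2]
  exact Finset.sum_congr rfl fun k _ => by rw [nsmul_eq_mul, mul_comm]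

lemma cosetMoment_apply_self (a : ℤ_[p]) (n j : ℕ) (t : ℤ_[p]) :
    cosetMoment p L a n j (a + (p : ℤ_[p]) ^ n * t) = ((p : L) ^ n * embHom p L t) ^ j := by
  rw [cosetMoment, Set.indicator_of_mem (by exact ⟨t, rfl⟩), embL_eq]
  simp

lemma cosetMoment_apply_of_ne {n a b : ℕ} (ha : a < p ^ n) (hb : b < p ^ n) (hab : a ≠ b) (j : ℕ)
    (t : ℤ_[p]) : cosetMoment p L a n j (b + (p : ℤ_[p]) ^ n * t) = 0 := by
  refine Set.indicator_of_notMem ?_ _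
  rintro ⟨s, hs⟩
  refine hab ?_
  have hmem : (b : ℤ_[p]) - a ∈ Ideal.span {(p : ℤ_[p]) ^ n} :=
    Ideal.mem_span_singleton.mpr ⟨s - t, by linear_combination hs⟩
  rw [← PadicInt.ker_toZModPow, RingHom.mem_ker, map_sub, map_natCast, map_natCast, sub_eq_zero,
    ZMod.natCast_eq_natCast_iff] at hmem
  exact (Nat.ModEq.eq_of_lt_of_lt hmem hb ha).symm

lemma cosetMoment_mem (a : ℤ_[p]) (n j d : ℕ) (hj : j ≤ d) :
    cosetMoment p L a n j ∈ locPoly p L n d := by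
  intro b
  by_cases h : ∃ s : ℤ_[p], b = a + (p : ℤ_[p]) ^ n * s
  · obtain ⟨s, rfl⟩ := h
    refine ⟨(X - C (embHom p L a)) ^ j, ?_, fun t => ?_⟩
    · rw [natDegree_pow, natDegree_X_sub_C, mul_one]; exact hj
    · rw [add_assoc, ← mul_add, cosetMoment_apply_self, embL_eq]
      simp
  · refine ⟨0, by simp, fun t => ?_⟩
    rw [eval_zero]
    refine Set.indicator_of_notMem ?_ _
    rintro ⟨s, hs⟩
    refine h ⟨s - t, ?_⟩
    linear_combination hs

lemma norm_cosetMoment_le (a : ℤ_[p]) (n j : ℕ) (z : ℤ_[p]) :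
    ‖cosetMoment p L a n j z‖ ≤ (((p : ℝ) ^ n)⁻¹) ^ j := by
  have hp : (0 : ℝ) < p := by exact_mod_cast (Fact.out : p.Prime).pos
  by_cases h : ∃ t : ℤ_[p], z = a + (p : ℤ_[p]) ^ n * t
  · obtain ⟨t, rfl⟩ := h
    rw [cosetMoment_apply_self, norm_pow, norm_mul, norm_p_pow, norm_embHom]
    gcongr
    exact mul_le_of_le_one_right (by positivity) (PadicInt.norm_le_one t)
  · rw [cosetMoment, Set.indicator_of_notMem (by exact h), norm_zero]
    positivity

variable (p L) in
/-- The function equal to `C((z - a)/pⁿ, j)` on `a + pⁿ ℤ_p` and to `0` elsewhere, written as a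
combination of the functions `cosetMoment`. -/
noncomputable def wave (a : ℤ_[p]) (n j : ℕ) : ℤ_[p] → L :=
  ∑ i ∈ Finset.range (j + 1), ((binomPoly L j).coeff i * (((p : L) ^ n)⁻¹) ^ i) •
    cosetMoment p L a n i

lemma wave_apply_self (a : ℤ_[p]) (n j : ℕ) (t : ℤ_[p]) :
    wave p L a n j (a + (p : ℤ_[p]) ^ n * t) = (binomPoly L j).eval (embHom p L t) := by
  rw [wave, Finset.sum_apply,
    eval_eq_sum_range' (Nat.lt_succ_of_le (natDegree_binomPoly_le j))]
  refine Finset.sum_congr rfl fun i _ => ?_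
  rw [Pi.smul_apply, cosetMoment_apply_self, smul_eq_mul, mul_assoc, ← mul_pow,
    inv_mul_cancel_left₀ (p_pow_ne_zero p L n)]

lemma wave_apply_of_ne {n a b : ℕ} (ha : a < p ^ n) (hb : b < p ^ n) (hab : a ≠ b) (j : ℕ)
    (t : ℤ_[p]) : wave p L a n j (b + (p : ℤ_[p]) ^ n * t) = 0 := by
  rw [wave, Finset.sum_apply]
  exact Finset.sum_eq_zero fun i _ => by
    rw [Pi.smul_apply, cosetMoment_apply_of_ne ha hb hab, smul_zero]

lemma wave_mem (a : ℤ_[p]) (n j d : ℕ) (hj : j ≤ d) : wave p L a n j ∈ locPoly p L n d :=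
  Submodule.sum_mem _ fun _ hi => Submodule.smul_mem _ _ <|
    cosetMoment_mem _ _ _ _ ((Nat.lt_succ_iff.mp (Finset.mem_range.mp hi)).trans hj)

variable (p L) in
/-- On each coset `a + pⁿ ℤ_p` with `0 ≤ a < pⁿ`, the polynomial of degree at most `d` that
interpolates `f` at `a, a + pⁿ, …, a + d pⁿ`. -/
noncomputable def interp (d n : ℕ) (f : ℤ_[p] → L) : ℤ_[p] → L :=
  ∑ a ∈ Finset.range (p ^ n), ∑ j ∈ Finset.range (d + 1),
    (Δ_[((p ^ n : ℕ) : ℤ_[p])] ^[j] f a) • wave p L a n j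

lemma interp_mem (d n : ℕ) (f : ℤ_[p] → L) : interp p L d n f ∈ locPoly p L n d :=
  Submodule.sum_mem _ fun _ _ => Submodule.sum_mem _ fun _ hj => Submodule.smul_mem _ _ <|
    wave_mem _ _ _ _ (Nat.lt_succ_iff.mp (Finset.mem_range.mp hj))

lemma interp_sub (d n : ℕ) (f g : ℤ_[p] → L) :
    interp p L d n (f - g) = interp p L d n f - interp p L d n g := by
  have h (j : ℕ) (x : ℤ_[p]) : Δ_[((p ^ n : ℕ) : ℤ_[p])] ^[j] (f - g) x =
      Δ_[((p ^ n : ℕ) : ℤ_[p])] ^[j] f x - Δ_[((p ^ n : ℕ) : ℤ_[p])] ^[j] g x := by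
    rw [← fwdDiff_aux.coe_fwdDiffₗ_pow, map_sub, Pi.sub_apply]
  simp only [interp, h, sub_smul, Finset.sum_sub_distrib]

lemma interp_apply {d n a : ℕ} (ha : a < p ^ n) (f : ℤ_[p] → L) (t : ℤ_[p]) :
    interp p L d n f (a + (p : ℤ_[p]) ^ n * t) = ∑ j ∈ Finset.range (d + 1),
      Δ_[((p ^ n : ℕ) : ℤ_[p])] ^[j] f a * (binomPoly L j).eval (embHom p L t) := by
  rw [interp, Finset.sum_apply, Finset.sum_eq_single a]
  · simp only [Finset.sum_apply, Pi.smul_apply, wave_apply_self, smul_eq_mul]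
  · intro b hb hba
    simp only [Finset.sum_apply, Pi.smul_apply,
      wave_apply_of_ne (Finset.mem_range.mp hb) ha hba, smul_zero, Finset.sum_const_zero]
  · exact fun h => absurd (Finset.mem_range.mpr ha) h

lemma interp_eq_self {d n : ℕ} {f : ℤ_[p] → L} (hf : f ∈ locPoly p L n d) :
    interp p L d n f = f := by
  ext z
  obtain ⟨a, t, ha, rfl⟩ := exists_coset z n
  obtain ⟨Q, hQd, hQ⟩ := exists_poly_coord hf a
  rw [interp_apply ha, hQ, eval_eq_newton p Q d hQd]
  exact Finset.sum_congr rfl fun j _ => by rw [fwdDiff_eq_of_coord hQ]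

end Interpolation

/-! ### Bounding `μ` on interpolants -/

section Criterion

variable {p : ℕ} [Fact p.Prime] {L : Type*} [NormedField L] [NormedAlgebra ℚ_[p] L]

/-- The supremum defining `‖f‖_r` is finite when `f` is locally polynomial; for an unbounded family
the real supremum would be `0`. -/
lemma coeff_le_crNorm (r : ℝ) (hr : 0 ≤ r) (d N : ℕ) (f : ℤ_[p] → L)
    (hf : f ∈ locPoly p L N d) (k : ℕ) :
    ((k : ℝ) + 1) ^ r * ‖mahlerCoeff f k‖ ≤ crNorm r f := by
  have := isUltrametricDist L p
  obtain ⟨M, hM⟩ := exists_bound hf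
  obtain ⟨K, -, hK⟩ := exists_coeff_bound p L r hr d
  exact le_ciSup (f := fun k : ℕ => ((k : ℝ) + 1) ^ r * ‖mahlerCoeff f k‖)
    ⟨_, Set.forall_mem_range.mpr (hK N f M hM (fwdDiff_locPoly_eq_zero hf))⟩ k

lemma rpow_moment (r : ℝ) (n j : ℕ) :
    (p : ℝ) ^ (-((n : ℝ) * ((j : ℝ) - r))) = ((p : ℝ) ^ n) ^ r * (((p : ℝ) ^ n)⁻¹) ^ j := by
  have hp : (0 : ℝ) < p := by exact_mod_cast (Fact.out : p.Prime).pos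
  rw [← Real.rpow_natCast (((p : ℝ) ^ n)⁻¹), Real.inv_rpow (by positivity),
    ← Real.rpow_neg (by positivity), ← Real.rpow_add (by positivity), ← Real.rpow_natCast (p : ℝ) n,
    ← Real.rpow_mul hp.le]
  congr 1; ring

/-- Under the moment condition, `|μ(wave a n j)| = O(pⁿʳ)`: the powers of `pⁿ` in the coefficients
of `wave` cancel those in the moments. -/
lemma norm_wave_le (r C : ℝ) (hC : 0 ≤ C) (d : ℕ) (μ : (ℤ_[p] → L) →ₗ[L] L)
    (hμ : ∀ (a : ℤ_[p]) (j n : ℕ), j ≤ d →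
      ‖μ (cosetMoment p L a n j)‖ ≤ C * (p : ℝ) ^ (-((n : ℝ) * ((j : ℝ) - r))))
    (a : ℤ_[p]) (n j : ℕ) (hj : j ≤ d) :
    ‖μ (wave p L a n j)‖ ≤ ‖((j.factorial : L)⁻¹)‖ * (C * ((p : ℝ) ^ n) ^ r) := by
  have := isUltrametricDist L p
  have hp : (0 : ℝ) < p := by exact_mod_cast (Fact.out : p.Prime).pos
  rw [wave, map_sum]
  refine IsUltrametricDist.norm_sum_le_of_forall_le_of_nonneg (by positivity) fun i hi => ?_
  have hi' : i ≤ d := (Nat.lt_succ_iff.mp (Finset.mem_range.mp hi)).trans hj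
  have h1 : ‖(binomPoly L j).coeff i‖ ≤ ‖((j.factorial : L)⁻¹)‖ := by
    rw [binomPoly, coeff_C_mul, norm_mul, ← descPochhammer_map (Int.castRingHom L), coeff_map]
    exact mul_le_of_le_one_right (norm_nonneg _) (norm_intCast_le_one p _)
  rw [map_smul, smul_eq_mul, norm_mul, norm_mul, norm_pow, norm_inv, norm_p_pow, inv_inv]
  have h2 := hμ a i n hi'
  rw [rpow_moment] at h2
  calc _ ≤ ‖((j.factorial : L)⁻¹)‖ * ((p : ℝ) ^ n) ^ i *
        (C * (((p : ℝ) ^ n) ^ r * (((p : ℝ) ^ n)⁻¹) ^ i)) := by gcongr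
    _ = ‖((j.factorial : L)⁻¹)‖ * (C * ((p : ℝ) ^ n) ^ r) *
        (((p : ℝ) ^ n) * ((p : ℝ) ^ n)⁻¹) ^ i := by rw [mul_pow]; ring
    _ = _ := by rw [mul_inv_cancel₀ (by positivity), one_pow, mul_one]

/-- Under the moment condition, `|μ(interp g)| = O(pⁿʳ sup_ℕ |g|)` at level `n`. -/
lemma exists_norm_interp_le (r C : ℝ) (hC : 0 ≤ C) (d : ℕ) (μ : (ℤ_[p] → L) →ₗ[L] L)
    (hμ : ∀ (a : ℤ_[p]) (j n : ℕ), j ≤ d →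
      ‖μ (cosetMoment p L a n j)‖ ≤ C * (p : ℝ) ^ (-((n : ℝ) * ((j : ℝ) - r)))) :
    ∃ D : ℝ, 0 ≤ D ∧ ∀ (n : ℕ) (g : ℤ_[p] → L) (M : ℝ), (∀ m : ℕ, ‖g m‖ ≤ M) →
      ‖μ (interp p L d n g)‖ ≤ D * ((p : ℝ) ^ n) ^ r * M := by
  have := isUltrametricDist L p
  have hp : (0 : ℝ) < p := by exact_mod_cast (Fact.out : p.Prime).pos
  set F := ∑ j ∈ Finset.range (d + 1), ‖((j.factorial : L)⁻¹)‖
  have hF : 0 ≤ F := Finset.sum_nonneg fun _ _ => norm_nonneg _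
  refine ⟨F * C, by positivity, fun n g M hg => ?_⟩
  have hM : 0 ≤ M := (norm_nonneg _).trans (hg 0)
  rw [interp, map_sum]
  refine IsUltrametricDist.norm_sum_le_of_forall_le_of_nonneg (by positivity) fun a _ => ?_
  rw [map_sum]
  refine IsUltrametricDist.norm_sum_le_of_forall_le_of_nonneg (by positivity) fun j hj => ?_
  have h1 : ‖Δ_[((p ^ n : ℕ) : ℤ_[p])] ^[j] g a‖ ≤ M :=
    norm_fwdDiff_iter_le _ _ _ _ (fun i => by
      have := hg (a + i * p ^ n)
      rw [nsmul_eq_mul]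
      push_cast at this ⊢
      exact this) _
  have h2 := norm_wave_le r C hC d μ hμ a n j (Nat.lt_succ_iff.mp (Finset.mem_range.mp hj))
  have h3 : ‖((j.factorial : L)⁻¹)‖ ≤ F :=
    Finset.single_le_sum (f := fun j : ℕ => ‖((j.factorial : L)⁻¹)‖) (fun _ _ => norm_nonneg _) hj
  rw [map_smul, smul_eq_mul, norm_mul]
  calc _ ≤ M * (F * (C * ((p : ℝ) ^ n) ^ r)) := by
        gcongr
        exact h2.trans (by gcongr)
    _ = _ := by ring

/-- By Newton's formula the interpolation error on `ℕ` at level `n` is controlled by the differences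
of order `d + 1`, hence is `O(p^{-nr})`. -/
lemma norm_sub_interp_le (r A : ℝ) (hr : 0 ≤ r) (d : ℕ) (hd : r - 1 < d) (f : ℤ_[p] → L)
    (hA : ∀ k : ℕ, ((k : ℝ) + 1) ^ r * ‖mahlerCoeff f k‖ ≤ A) (n m : ℕ) :
    ‖(f - interp p L d n f) m‖ ≤ A / ((p : ℝ) ^ n) ^ r := by
  have := isUltrametricDist L p
  have hp : (0 : ℝ) < p := by exact_mod_cast (Fact.out : p.Prime).pos
  have hA0 : 0 ≤ A := le_trans (by positivity) (hA 0)
  set a := m % p ^ n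
  set t := m / p ^ n
  have ha : a < p ^ n := Nat.mod_lt _ (pow_pos (Fact.out : p.Prime).pos n)
  have hm : (m : ℤ_[p]) = a + (p : ℤ_[p]) ^ n * (t : ℤ_[p]) := by
    exact_mod_cast (Nat.mod_add_div m (p ^ n)).symm
  set D : ℕ → L := fun j => Δ_[((p ^ n : ℕ) : ℤ_[p])] ^[j] f a with hDdef
  have hf : f m = ∑ j ∈ Finset.range (t + 1), (t.choose j : L) * D j := by
    have := shift_eq_sum_fwdDiff_iter ((p ^ n : ℕ) : ℤ_[p]) f t a
    rw [nsmul_eq_mul, mul_comm, Nat.cast_pow, ← hm] at this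
    rw [this]
    exact Finset.sum_congr rfl fun j _ => by rw [nsmul_eq_mul, hDdef, Nat.cast_pow]
  have hi : interp p L d n f m = ∑ j ∈ Finset.range (d + 1), (t.choose j : L) * D j := by
    rw [hm, interp_apply ha]
    refine Finset.sum_congr rfl fun j _ => ?_
    rw [map_natCast, binomPoly_eval_natCast p, mul_comm]
  have e1 : ∑ j ∈ Finset.range (t + 1), (t.choose j : L) * D j =
      ∑ j ∈ Finset.range (d + 1 + t), (t.choose j : L) * D j := by
    refine Finset.sum_subset (Finset.range_subset_range.mpr (by omega)) fun k _ hk => ?_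
    rw [Nat.choose_eq_zero_of_lt (by rw [Finset.mem_range] at hk; omega), Nat.cast_zero, zero_mul]
  rw [Pi.sub_apply, hf, hi, e1, Finset.sum_range_add, add_sub_cancel_left]
  refine IsUltrametricDist.norm_sum_le_of_forall_le_of_nonneg (by positivity) fun i _ => ?_
  rw [norm_mul]
  refine (mul_le_of_le_one_left (norm_nonneg _) (norm_natCast_le_one p _)).trans ?_
  have : D (d + 1 + i) = Δ_[((p ^ n : ℕ) : ℤ_[p])] ^[i]
      (Δ_[((p ^ n : ℕ) : ℤ_[p])] ^[d + 1] f) a := by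
    rw [← Function.iterate_add_apply, add_comm i]
  rw [this]
  refine norm_fwdDiff_iter_le _ _ _ _ (fun l => ?_) _
  have := norm_fwdDiff_natCast_le r A hr d hd f hA n (a + l * p ^ n)
  rw [nsmul_eq_mul]
  rwa [Nat.cast_add, Nat.cast_mul] at this

/-- Passing from level `n` to level `n + 1` changes `μ(interp f)` by `O(p^{(n+1)r} p^{-nr})`, and the
nonarchimedean triangle inequality makes this uniform in the number of steps. -/
lemma norm_interp_le (r A D : ℝ) (hr : 0 ≤ r) (d : ℕ) (hd : r - 1 < d) (hD : 0 ≤ D)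
    (μ : (ℤ_[p] → L) →ₗ[L] L)
    (hμ : ∀ (n : ℕ) (g : ℤ_[p] → L) (M : ℝ), (∀ m : ℕ, ‖g m‖ ≤ M) →
      ‖μ (interp p L d n g)‖ ≤ D * ((p : ℝ) ^ n) ^ r * M)
    (f : ℤ_[p] → L) (hA : ∀ k : ℕ, ((k : ℝ) + 1) ^ r * ‖mahlerCoeff f k‖ ≤ A) (n : ℕ) :
    ‖μ (interp p L d n f)‖ ≤ D * (p : ℝ) ^ r * A := by
  have := isUltrametricDist L p
  have hp : (1 : ℝ) ≤ p := by exact_mod_cast (Fact.out : p.Prime).one_lt.le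
  have hp0 : (0 : ℝ) < p := by linarith
  have hA0 : 0 ≤ A := le_trans (by positivity) (hA 0)
  induction n with
  | zero =>
    refine (hμ 0 f A (norm_natCast_apply_le r A hr f hA)).trans ?_
    rw [pow_zero, Real.one_rpow]
    gcongr
    exact Real.one_le_rpow hp hr
  | succ n ih =>
    have h1 : interp p L d (n + 1) f =
        interp p L d n f + interp p L d (n + 1) (f - interp p L d n f) := by
      rw [interp_sub, interp_eq_self (locPoly_succ _ _ _ (interp_mem d n f))]
      abel
    rw [h1, map_add]
    refine (IsUltrametricDist.norm_add_le_max _ _).trans (max_le ih ?_)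
    refine (hμ (n + 1) _ _ (norm_sub_interp_le r A hr d hd f hA n)).trans (le_of_eq ?_)
    rw [pow_succ, Real.mul_rpow (by positivity) hp0.le]
    have : ((p : ℝ) ^ n) ^ r ≠ 0 := by positivity
    field_simp

end Criterion

end AmiceVeluVishik

/-- (Amice–Vélu/Vishik criterion) Let `μ` be a linear form on `Pol^d(ℤ_p, L)` with
`r − 1 < d`.  Then `μ` extends to a continuous linear form on `C^r(ℤ_p, L)` (i.e. is
bounded with respect to `‖·‖_r` on locally polynomial functions of degree `≤ d`) if and
only if there is a constant `C` with
`|∫_{a+p^n ℤ_p} (z−a)^j dμ| ≤ C · p^{−n(j−r)}` for all `a ∈ ℤ_p`, `0 ≤ j ≤ d`, `n ∈ ℕ`. -/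
theorem amice_velu_vishik_criterion
    (p : ℕ) [Fact p.Prime]
    (L : Type*) [NormedField L] [NormedAlgebra ℚ_[p] L] [CompleteSpace L]
    (r : ℝ) (hr : 0 ≤ r) (d : ℕ) (hd : r - 1 < (d : ℝ))
    (μ : (ℤ_[p] → L) →ₗ[L] L) :
    (∃ B : ℝ, ∀ f : ℤ_[p] → L, IsLocPoly p L d f → ‖μ f‖ ≤ B * crNorm r f) ↔
      (∃ C : ℝ, ∀ (a : ℤ_[p]) (j n : ℕ), j ≤ d →
        ‖μ (cosetMoment p L a n j)‖ ≤ C * (p : ℝ) ^ (-((n : ℝ) * ((j : ℝ) - r)))) := by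
  have := AmiceVeluVishik.isUltrametricDist L p
  have hp : (0 : ℝ) < p := by exact_mod_cast (Fact.out : p.Prime).pos
  constructor
  · rintro ⟨B, hB⟩
    obtain ⟨K, hK0, hK⟩ := AmiceVeluVishik.exists_coeff_bound p L r hr d
    refine ⟨|B| * K, fun a j n hj => ?_⟩
    have hmem := AmiceVeluVishik.cosetMoment_mem (L := L) a n j d hj
    have hcr : crNorm r (cosetMoment p L a n j) ≤
        K * (((p : ℝ) ^ n) ^ r * (((p : ℝ) ^ n)⁻¹) ^ j) :=
      ciSup_le (hK n _ _ (AmiceVeluVishik.norm_cosetMoment_le a n j)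
        (AmiceVeluVishik.fwdDiff_locPoly_eq_zero hmem))
    have hcr0 : 0 ≤ crNorm r (cosetMoment p L a n j) := Real.iSup_nonneg fun k => by positivity
    rw [AmiceVeluVishik.rpow_moment]
    calc _ ≤ B * crNorm r (cosetMoment p L a n j) := hB _ ⟨n, hmem⟩
      _ ≤ |B| * crNorm r (cosetMoment p L a n j) := by gcongr; exact le_abs_self B
      _ ≤ |B| * (K * (((p : ℝ) ^ n) ^ r * (((p : ℝ) ^ n)⁻¹) ^ j)) := by gcongr
      _ = _ := by ring
  · rintro ⟨C, hC⟩
    have hC0 : 0 ≤ C := by simpa using (norm_nonneg _).trans (hC 0 0 0 (Nat.zero_le d))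
    obtain ⟨D, hD0, hD⟩ := AmiceVeluVishik.exists_norm_interp_le r C hC0 d μ hC
    refine ⟨D * (p : ℝ) ^ r, fun f hf => ?_⟩
    obtain ⟨N, hN⟩ := (AmiceVeluVishik.isLocPoly_iff d f).mp hf
    have h := AmiceVeluVishik.norm_interp_le r (crNorm r f) D hr d hd hD0 μ hD f
      (AmiceVeluVishik.coeff_le_crNorm r hr d N f hN) N
    rwa [AmiceVeluVishik.interp_eq_self hN] at h
end

section
/- Under the Amice transform μ ↦ Σ_{n≥0} μ(C(z,n)) X^n, which identifies the dual of locally analytic functions on Z_p with the ring R^+ of power series converging on the open unit disc, a locally analytic distribution μ extends continuously to C^r(Z_p, L) if and only if its Amice transform is of order r in R^+. -/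
/-!
The binomial functions `C(z,n)` are polynomials, with Mahler coefficients `δ_{mn}`, hence
`‖C(z,n)‖_r = (n+1)^r`; testing a bound for `μ` on them gives the growth condition. Conversely,
if `|μ(C(z,n))| ≤ C (n+1)^r`, then the ultrametric inequality applied to
`μ(f) = Σ a_n(f) μ(C(z,n))` gives `|μ(f)| ≤ C ‖f‖_r`, as soon as the supremum defining `‖f‖_r`
is finite (an unbounded real supremum is `0` by convention).

That finiteness is the substance of the proof (`IsLocAn.bddAbove_crNorm`): the Mahler
coefficients `a_n(f) = Δ^n f(0)` of a locally analytic `f` decay exponentially. Up to a scalar,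
`f` has integral expansions in the variable `t` on every disc `a + p^M ℤ_p`, `z = a + p^M t`
(`IsLocAn.exists_smul_mem`). Let `T` be the shift by `1` and `q = p^(M+1)`. Then
`Δ^q = (T - 1)^q ≡ T^q - 1` modulo `p`, and `T^q` acts as `t ↦ t + p`, so that `T^q - 1` sends an
integral power series to `p` times an integral one. Thus `Δ^q` gains a factor `p` each time it
is applied (`locUnit_fwdDiff_iter_pow`), and `|Δ^n f(0)| ≤ const · p^(-⌊n/q⌋)`.

Integral power series are handled as the closure, for pointwise convergence, of the ring of
integral polynomial functions; this suffices because `Δ^n f(0)` involves finitely many values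
of `f`, and the two facts needed about translations then only have to be checked on generators.
-/

open Filter

/-- The binomial function `z ↦ C(z,n)` with values in `L`. -/
noncomputable def binomFn (p : ℕ) [Fact p.Prime] (L : Type*) [NormedField L]
    [NormedAlgebra ℚ_[p] L] (n : ℕ) : ℤ_[p] → L :=
  fun z => algebraMap ℚ_[p] L ((Ring.choose z n : ℤ_[p]) : ℚ_[p])

/-- `f` is locally analytic on `ℤ_p`: on each coset of some `p^N ℤ_p` it is given by a
convergent power series. -/
def IsLocAn (p : ℕ) [Fact p.Prime] (L : Type*) [NormedField L]
    [NormedAlgebra ℚ_[p] L] (f : ℤ_[p] → L) : Prop :=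
  ∃ N : ℕ, ∀ a : ℤ_[p], ∃ c : ℕ → L,
    Tendsto (fun n : ℕ => ‖c n‖ * (((p : ℝ) ^ N)⁻¹) ^ n) atTop (nhds 0) ∧
    ∀ t : ℤ_[p], f (a + (p : ℤ_[p]) ^ N * t) = ∑' n : ℕ, c n * (embL p L t) ^ n

open fwdDiff

lemma mahlerCoeff_eq_fwdDiff {p : ℕ} [Fact p.Prime] {L : Type*} [NormedField L]
    (f : ℤ_[p] → L) (n : ℕ) :
    mahlerCoeff f n = Δ_[1] ^[n] f 0 := by
  rw [fwdDiff_iter_eq_sum_shift, mahlerCoeff, ← Finset.sum_range_reflect]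
  refine Finset.sum_congr rfl fun k hk => ?_
  have hk' : k ≤ n := Nat.lt_succ_iff.mp (Finset.mem_range.mp hk)
  have h1 : n + 1 - 1 - k = n - k := by omega
  have h2 : n - (n - k) = k := by omega
  rw [h1, h2, Nat.choose_symm hk']
  simp [zsmul_eq_mul]

lemma crNorm_nonneg {p : ℕ} [Fact p.Prime] {L : Type*} [NormedField L]
    (r : ℝ) (f : ℤ_[p] → L) : 0 ≤ crNorm r f :=
  Real.iSup_nonneg fun n => by positivity

section Aux

variable {p : ℕ} [Fact p.Prime] {L : Type*} [NormedField L] [NormedAlgebra ℚ_[p] L]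

/-- `embL` as a ring homomorphism. -/
noncomputable def embHom (p : ℕ) [Fact p.Prime] (L : Type*) [NormedField L]
    [NormedAlgebra ℚ_[p] L] : ℤ_[p] →+* L :=
  (algebraMap ℚ_[p] L).comp PadicInt.Coe.ringHom

lemma embHom_apply (z : ℤ_[p]) : embHom p L z = embL p L z := rfl

lemma norm_embHom (z : ℤ_[p]) : ‖embHom p L z‖ = ‖z‖ := by
  rw [embHom_apply, embL, norm_algebraMap', PadicInt.norm_def]

lemma norm_embHom_le (z : ℤ_[p]) : ‖embHom p L z‖ ≤ 1 := by
  rw [norm_embHom]; exact PadicInt.norm_le_one z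

variable (p L) in
lemma norm_natCast_p : ‖(p : L)‖ = (p : ℝ)⁻¹ := by
  rw [← map_natCast (embHom p L), norm_embHom, PadicInt.norm_p]

variable (p L) in
lemma natCast_p_ne_zero : (p : L) ≠ 0 := by
  rw [← norm_ne_zero_iff, norm_natCast_p p L]
  exact inv_ne_zero (mod_cast (Fact.out : p.Prime).ne_zero)

lemma isUltrametricDist_of_padic (p : ℕ) [Fact p.Prime] (L : Type*) [NormedField L]
    [NormedAlgebra ℚ_[p] L] : IsUltrametricDist L :=
  IsUltrametricDist.isUltrametricDist_of_forall_norm_natCast_le_one fun n => by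
    rw [← map_natCast (embHom p L)]; exact norm_embHom_le _

/-! ### Mahler coefficients of the binomial functions -/

lemma mahlerCoeff_binomFn (m n : ℕ) :
    mahlerCoeff (binomFn p L m) n = if n = m then 1 else 0 := by
  have h := congrArg (Int.cast : ℤ → L) (fwdDiff_iter_choose_zero m n)
  rw [mahlerCoeff_eq_fwdDiff, fwdDiff_iter_eq_sum_shift]
  rw [fwdDiff_iter_eq_sum_shift] at h
  push_cast at h
  rw [← h]
  refine Finset.sum_congr rfl fun k _ => ?_
  simp [binomFn, Ring.choose_natCast, zsmul_eq_mul]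

/-! ### The binomial functions are locally analytic -/

lemma isLocAn_binomFn (n : ℕ) : IsLocAn p L (binomFn p L n) := by
  have : CharZero L := charZero_of_injective_algebraMap (algebraMap ℚ_[p] L).injective
  refine ⟨0, fun a => ?_⟩
  let P : Polynomial L := Polynomial.C ((n.factorial : L)⁻¹) *
    ((descPochhammer ℤ n).map (Int.castRingHom L)).comp
      (Polynomial.X + Polynomial.C (embHom p L a))
  have hP : ∀ t : ℤ_[p], binomFn p L n (a + t) = P.eval (embHom p L t) := by
    intro t
    have h := congrArg (embHom p L) (Ring.descPochhammer_eq_factorial_smul_choose (a + t) n)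
    rw [nsmul_eq_mul, map_mul, map_natCast, ← Polynomial.aeval_eq_smeval,
      Polynomial.aeval_def, Polynomial.hom_eval₂] at h
    have h3 : binomFn p L n (a + t) = embHom p L (Ring.choose (a + t) n) := rfl
    have h0 : (n.factorial : L) ≠ 0 := Nat.cast_ne_zero.mpr n.factorial_ne_zero
    rw [h3, Polynomial.eval_mul, Polynomial.eval_C, Polynomial.eval_comp, Polynomial.eval_map,
      eq_inv_mul_iff_mul_eq₀ h0, ← h]
    congr 1
    · exact RingHom.ext_int _ _
    · simp [add_comm]
  refine ⟨P.coeff, ?_, fun t => ?_⟩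
  · refine tendsto_const_nhds.congr' ?_
    filter_upwards [eventually_gt_atTop P.natDegree] with k hk
    simp [Polynomial.coeff_eq_zero_of_natDegree_lt hk]
  · rw [pow_zero, one_mul, hP, Polynomial.eval_eq_sum_range, tsum_eq_sum]
    · rfl
    · intro k hk
      rw [Polynomial.coeff_eq_zero_of_natDegree_lt (by simpa using hk), zero_mul]

/-! ### Integral power series and shifts -/

/-- The ring of functions `ℤ_p → L` generated by the coordinate and the constants of norm at
most `1`, i.e. the polynomial functions with integral coefficients. -/
noncomputable def polyUnit (p : ℕ) [Fact p.Prime] (L : Type*) [NormedField L]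
    [NormedAlgebra ℚ_[p] L] : Subring (ℤ_[p] → L) :=
  Subring.closure ({g | ∃ c : L, ‖c‖ ≤ 1 ∧ g = fun _ => c} ∪ {⇑(embHom p L)})

/-- The closure of `polyUnit` for pointwise convergence. It contains every convergent power
series with integral coefficients. -/
noncomputable def anUnit (p : ℕ) [Fact p.Prime] (L : Type*) [NormedField L]
    [NormedAlgebra ℚ_[p] L] : Subring (ℤ_[p] → L) :=
  (polyUnit p L).topologicalClosure

lemma const_mem_polyUnit {c : L} (hc : ‖c‖ ≤ 1) : (fun _ => c) ∈ polyUnit p L :=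
  Subring.subset_closure (Or.inl ⟨c, hc, rfl⟩)

lemma embHom_mem_polyUnit : ⇑(embHom p L) ∈ polyUnit p L :=
  Subring.subset_closure (Or.inr rfl)

lemma polyUnit_shift (s : ℤ_[p]) {g : ℤ_[p] → L} (hg : g ∈ polyUnit p L) :
    (fun t => g (t + s)) ∈ polyUnit p L := by
  induction hg using Subring.closure_induction with
  | mem g hg =>
    rcases hg with ⟨c, hc, rfl⟩ | rfl
    · exact const_mem_polyUnit hc
    · simp only [map_add]
      exact add_mem embHom_mem_polyUnit (const_mem_polyUnit (norm_embHom_le s))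
  | zero => exact zero_mem _
  | one => exact one_mem _
  | add f g _ _ hf hg => exact add_mem hf hg
  | neg f _ hf => exact neg_mem hf
  | mul f g _ _ hf hg => exact mul_mem hf hg

/-- Translating an integral polynomial by `p` changes it by `p` times an integral polynomial,
because `(g h)(t+p) - (g h)(t) = (g(t+p) - g(t)) h(t+p) + g(t) (h(t+p) - h(t))`. -/
lemma polyUnit_shift_sub {g : ℤ_[p] → L} (hg : g ∈ polyUnit p L) :
    (fun t => (p : L)⁻¹ * (g (t + p) - g t)) ∈ polyUnit p L := by
  induction hg using Subring.closure_induction with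
  | mem g hg =>
    rcases hg with ⟨c, hc, rfl⟩ | rfl
    · convert zero_mem (polyUnit p L) using 1; funext t; simp
    · have h := natCast_p_ne_zero p L
      simp only [map_add, map_natCast, add_sub_cancel_left, inv_mul_cancel₀ h]
      exact one_mem _
  | zero => convert zero_mem (polyUnit p L) using 1; funext t; simp
  | one => convert zero_mem (polyUnit p L) using 1; funext t; simp
  | add f g _ _ hf hg =>
    convert add_mem hf hg using 1
    funext t; simp only [Pi.add_apply]; ring
  | neg f _ hf =>
    convert neg_mem hf using 1
    funext t; simp only [Pi.neg_apply]; ring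
  | mul f g hf' hg' hf hg =>
    convert add_mem (mul_mem hf (polyUnit_shift (p : ℤ_[p]) hg')) (mul_mem hf' hg) using 1
    funext t; simp only [Pi.add_apply, Pi.mul_apply]; ring

lemma norm_le_one_of_mem_anUnit [IsUltrametricDist L] {g : ℤ_[p] → L} (hg : g ∈ anUnit p L)
    (t : ℤ_[p]) : ‖g t‖ ≤ 1 := by
  have hcl : IsClosed {g : ℤ_[p] → L | ‖g t‖ ≤ 1} :=
    isClosed_le (continuous_apply t).norm continuous_const
  refine closure_minimal (t := {g : ℤ_[p] → L | ‖g t‖ ≤ 1}) ?_ hcl hg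
  intro g hg
  change ‖g t‖ ≤ 1
  induction hg using Subring.closure_induction with
  | mem g hg =>
    rcases hg with ⟨c, hc, rfl⟩ | rfl
    · exact hc
    · exact norm_embHom_le t
  | zero => simp
  | one => simp
  | add f g _ _ hf hg => exact (IsUltrametricDist.norm_add_le_max _ _).trans (max_le hf hg)
  | neg f _ hf => simpa using hf
  | mul f g _ _ hf hg =>
    rw [Pi.mul_apply, norm_mul]
    exact mul_le_one₀ hf (norm_nonneg _) hg

lemma anUnit_shift (s : ℤ_[p]) {g : ℤ_[p] → L} (hg : g ∈ anUnit p L) :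
    (fun t => g (t + s)) ∈ anUnit p L :=
  map_mem_closure (f := fun (g : ℤ_[p] → L) t => g (t + s)) (by fun_prop) hg
    fun _ h => polyUnit_shift s h

lemma anUnit_shift_sub {g : ℤ_[p] → L} (hg : g ∈ anUnit p L) :
    (fun t => (p : L)⁻¹ * (g (t + p) - g t)) ∈ anUnit p L :=
  map_mem_closure (f := fun (g : ℤ_[p] → L) t => (p : L)⁻¹ * (g (t + p) - g t))
    (by fun_prop) hg fun _ h => polyUnit_shift_sub h

/-- A power series with integral coefficients tending to `0` lies in `anUnit`, being the
pointwise limit of its partial sums. -/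
lemma tsum_mem_anUnit [CompleteSpace L] [IsUltrametricDist L] {c : ℕ → L}
    (hc : ∀ n, ‖c n‖ ≤ 1) (h0 : Tendsto (fun n => ‖c n‖) atTop (nhds 0)) :
    (fun t : ℤ_[p] => ∑' n, c n * embHom p L t ^ n) ∈ anUnit p L := by
  have hs : ∀ t : ℤ_[p], HasSum (fun n => c n * embHom p L t ^ n)
      (∑' n, c n * embHom p L t ^ n) := by
    intro t
    refine (NonarchimedeanAddGroup.summable_of_tendsto_cofinite_zero ?_).hasSum
    rw [Nat.cofinite_eq_atTop]
    refine squeeze_zero_norm (fun n => ?_) h0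
    rw [norm_mul, norm_pow]
    exact mul_le_of_le_one_right (norm_nonneg _)
      (pow_le_one₀ (norm_nonneg _) (norm_embHom_le t))
  refine mem_closure_of_tendsto
    (f := fun N (t : ℤ_[p]) => ∑ n ∈ Finset.range N, c n * embHom p L t ^ n) (b := atTop)
    (tendsto_pi_nhds.mpr fun t => (hs t).tendsto_sum_nat) (Eventually.of_forall fun N => ?_)
  have : (fun t : ℤ_[p] => ∑ n ∈ Finset.range N, c n * embHom p L t ^ n) =
      ∑ n ∈ Finset.range N, (fun _ => c n) * ⇑(embHom p L) ^ n := by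
    funext t; simp
  rw [this]
  exact sum_mem fun n _ => mul_mem (const_mem_polyUnit (hc n)) (pow_mem embHom_mem_polyUnit n)

/-! ### Decay of finite differences of locally analytic functions -/

/-- The unit ball (up to closure) of the functions that are analytic on each coset of
`p^M ℤ_p`: the expansion around every point, in the variable `t` with `z = a + p^M t`, is
integral. -/
noncomputable def locUnit (p : ℕ) [Fact p.Prime] (L : Type*) [NormedField L]
    [NormedAlgebra ℚ_[p] L] (M : ℕ) : AddSubgroup (ℤ_[p] → L) where
  carrier := {f | ∀ a : ℤ_[p], (fun t => f (a + (p : ℤ_[p]) ^ M * t)) ∈ anUnit p L}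
  add_mem' hf hg a := add_mem (hf a) (hg a)
  zero_mem' _ := zero_mem _
  neg_mem' hf a := neg_mem (hf a)

lemma mem_locUnit {M : ℕ} {f : ℤ_[p] → L} :
    f ∈ locUnit p L M ↔ ∀ a : ℤ_[p], (fun t => f (a + (p : ℤ_[p]) ^ M * t)) ∈ anUnit p L :=
  Iff.rfl

lemma norm_le_one_of_mem_locUnit [IsUltrametricDist L] {M : ℕ} {f : ℤ_[p] → L}
    (hf : f ∈ locUnit p L M) (z : ℤ_[p]) : ‖f z‖ ≤ 1 := by
  simpa using norm_le_one_of_mem_anUnit (hf z) 0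

lemma locUnit_fwdDiff {M : ℕ} {f : ℤ_[p] → L} (hf : f ∈ locUnit p L M) :
    Δ_[1] f ∈ locUnit p L M := by
  refine sub_mem (x := fun z => f (z + 1)) (fun a => ?_) hf
  simpa only [add_right_comm] using hf (a + 1)

lemma locUnit_fwdDiff_iter {M : ℕ} {f : ℤ_[p] → L} (hf : f ∈ locUnit p L M) (n : ℕ) :
    Δ_[1] ^[n] f ∈ locUnit p L M := by
  induction n with
  | zero => exact hf
  | succ n ih => rw [Function.iterate_succ_apply']; exact locUnit_fwdDiff ih

/-- The key contraction: `Δ^q` with `q = p^(M+1)` gains a factor `p` on `locUnit`. Indeed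
`Δ^q = (T^q - 1) - Σ_{0<k<q} C(q,k) Δ^k` for the shift `T`, the inner binomial coefficients are
divisible by `p`, and `T^q` is the translation by `p` in the variable `t`. -/
lemma locUnit_fwdDiff_iter_pow {M : ℕ} {f : ℤ_[p] → L} (hf : f ∈ locUnit p L M) :
    (p : L)⁻¹ • Δ_[1] ^[p ^ (M + 1)] f ∈ locUnit p L M := by
  have hp : p.Prime := Fact.out
  have hpL := natCast_p_ne_zero p L
  set q := p ^ (M + 1) with hq
  have hq0 : 0 < q := pow_pos hp.pos _
  obtain ⟨u, hu⟩ : ∃ u, q = u + 1 := ⟨q - 1, by omega⟩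
  have hT : (fun z => (p : L)⁻¹ * (f (z + q) - f z)) ∈ locUnit p L M := by
    intro a
    convert anUnit_shift_sub (hf a) using 1
    funext t
    have key : a + (p : ℤ_[p]) ^ M * (t + p) = a + (p : ℤ_[p]) ^ M * t + (q : ℕ) := by
      rw [hq]; push_cast; ring
    simp only [key]
  have hS : (∑ k ∈ Finset.range u, (q.choose (k + 1) / p) • Δ_[1] ^[k + 1] f) ∈ locUnit p L M :=
    sum_mem fun k _ => nsmul_mem (locUnit_fwdDiff_iter hf _) _
  convert sub_mem hT hS using 1
  funext z
  have h := shift_eq_sum_fwdDiff_iter (1 : ℤ_[p]) f q z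
  rw [Finset.sum_range_succ] at h
  nth_rewrite 2 [hu] at h
  rw [Finset.sum_range_succ'] at h
  simp only [Nat.choose_self, one_smul, Nat.choose_zero_right, Function.iterate_zero, id,
    nsmul_one] at h
  have hc : ∀ k ∈ Finset.range u, (q.choose (k + 1) • Δ_[1] ^[k + 1] f z : L) =
      p * ((q.choose (k + 1) / p) • Δ_[1] ^[k + 1] f z) := by
    intro k hk
    have hk' := Finset.mem_range.mp hk
    have hd : p ∣ q.choose (k + 1) :=
      hp.dvd_choose_pow (Nat.succ_ne_zero k) (by rw [← hq]; omega)
    rw [nsmul_eq_mul, nsmul_eq_mul, ← mul_assoc, ← Nat.cast_mul, Nat.mul_div_cancel' hd]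
  rw [Finset.sum_congr rfl hc, ← Finset.mul_sum] at h
  simp only [Pi.smul_apply, Pi.sub_apply, Finset.sum_apply, smul_eq_mul]
  rw [h]
  field_simp
  ring

lemma norm_fwdDiff_iter_mul_le [IsUltrametricDist L] {M : ℕ} {f : ℤ_[p] → L}
    (hf : f ∈ locUnit p L M) (m k : ℕ) :
    ‖Δ_[1] ^[k + p ^ (M + 1) * m] f 0‖ ≤ ((p : ℝ)⁻¹) ^ m := by
  have hpL := natCast_p_ne_zero p L
  induction m generalizing f with
  | zero => simpa using norm_le_one_of_mem_locUnit (locUnit_fwdDiff_iter hf k) 0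
  | succ m ih =>
    have h := ih (locUnit_fwdDiff_iter_pow hf)
    rw [fwdDiff_iter_const_smul, ← Function.iterate_add_apply, Pi.smul_apply, norm_smul,
      norm_inv, norm_natCast_p p L, inv_inv] at h
    have hp0 : (0 : ℝ) < p := mod_cast (Fact.out : p.Prime).pos
    rw [Nat.mul_succ, ← add_assoc, pow_succ' (p : ℝ)⁻¹, le_inv_mul_iff₀ hp0]
    exact h

/-- A locally analytic function is a scalar multiple of an element of some `locUnit`. The level
has to be doubled: the hypothesis of `IsLocAn` controls the expansion in `t` only for
`t = p^N s`, where the coset variable is `p^N t = p^(2N) s`. The scalar exists since finitely many cosets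
suffice. -/
lemma IsLocAn.exists_smul_mem [CompleteSpace L] [IsUltrametricDist L] {f : ℤ_[p] → L}
    (hf : IsLocAn p L f) : ∃ M j : ℕ, (p : L) ^ j • f ∈ locUnit p L M := by
  obtain ⟨N, hN⟩ := hf
  choose c hc hfc using hN
  have hp1 : 1 < p := (Fact.out : p.Prime).one_lt
  let d : ℤ_[p] → ℕ → L := fun a n => c a n * ((p : L) ^ N) ^ n
  have hd : ∀ a, Tendsto (fun n => ‖d a n‖) atTop (nhds 0) := fun a => by
    simpa [d, norm_natCast_p p L] using hc a
  have hbd : ∀ a, ∃ B : ℝ, ∀ n, ‖d a n‖ ≤ B := fun a => by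
    obtain ⟨B, hB⟩ := (hd a).bddAbove_range
    exact ⟨B, fun n => hB ⟨n, rfl⟩⟩
  choose B hB using hbd
  have hB0 : ∀ a, 0 ≤ B a := fun a => (norm_nonneg _).trans (hB a 0)
  let C : ℝ := ∑ i ∈ Finset.range (p ^ (N + N)), B i
  obtain ⟨j, hj⟩ := pow_unbounded_of_one_lt C (Nat.one_lt_cast.mpr hp1 : (1 : ℝ) < p)
  refine ⟨N + N, j, fun a => ?_⟩
  have hrep : ∀ i < p ^ (N + N),
      (fun t : ℤ_[p] => (p : L) ^ j * f (i + (p : ℤ_[p]) ^ (N + N) * t)) ∈ anUnit p L := by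
    intro i hi
    have hfun : (fun t : ℤ_[p] => (p : L) ^ j * f (i + (p : ℤ_[p]) ^ (N + N) * t)) =
        fun t => ∑' n, ((p : L) ^ j * d i n) * embHom p L t ^ n := by
      funext t
      rw [pow_add, mul_assoc, hfc, ← tsum_mul_left]
      refine tsum_congr fun n => ?_
      rw [← embHom_apply, map_mul, map_pow, map_natCast, mul_pow]
      simp only [d]
      ring
    have hpj : ‖(p : L) ^ j‖ ≤ 1 := by
      rw [norm_pow, norm_natCast_p p L]
      exact pow_le_one₀ (by positivity) (inv_le_one_of_one_le₀ (mod_cast hp1.le))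
    rw [hfun]
    refine tsum_mem_anUnit (fun n => ?_) ?_
    · rw [norm_mul, norm_pow, norm_natCast_p p L, inv_pow,
        inv_mul_le_iff₀ (by positivity), mul_one]
      refine ((hB i n).trans ?_).trans hj.le
      exact Finset.single_le_sum (f := fun i : ℕ => B i) (fun i _ => hB0 i)
        (Finset.mem_range.mpr hi)
    · simp only [norm_mul]
      simpa using (hd i).const_mul ‖(p : L) ^ j‖
  obtain ⟨s, hs⟩ := Ideal.mem_span_singleton.mp (PadicInt.appr_spec (N + N) a)
  convert anUnit_shift s (hrep _ (PadicInt.appr_lt a (N + N))) using 1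
  funext t
  rw [Pi.smul_apply, smul_eq_mul, mul_add, ← hs]
  congr 2
  ring

/-- The Mahler coefficients of a locally analytic function decay faster than any power of `n`,
so the supremum defining `crNorm` is a genuine one. -/
lemma IsLocAn.bddAbove_crNorm [CompleteSpace L] {f : ℤ_[p] → L} (hf : IsLocAn p L f) (r : ℝ) :
    BddAbove (Set.range fun n : ℕ => ((n : ℝ) + 1) ^ r * ‖mahlerCoeff f n‖) := by
  have := isUltrametricDist_of_padic p L
  obtain ⟨M, j, h⟩ := hf.exists_smul_mem
  have hp1 : 1 < p := (Fact.out : p.Prime).one_lt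
  have hpR : (1 : ℝ) < p := mod_cast hp1
  set q := p ^ (M + 1) with hq
  have hq0 : 0 < q := pow_pos (by omega) _
  let s := ⌈r⌉₊
  have hlim : Tendsto (fun m : ℕ => ((m + 1 : ℕ) : ℝ) ^ s * ((p : ℝ)⁻¹) ^ (m + 1))
      atTop (nhds 0) :=
    (tendsto_pow_const_mul_const_pow_of_abs_lt_one s (r := (p : ℝ)⁻¹) (by
      rw [abs_of_pos (by positivity)]; exact inv_lt_one_of_one_lt₀ hpR)).comp
        (tendsto_add_atTop_nat 1)
  obtain ⟨D, hD⟩ := hlim.bddAbove_range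
  refine ⟨(q : ℝ) ^ s * (p : ℝ) ^ (j + 1) * D, ?_⟩
  rintro _ ⟨n, rfl⟩
  let m := n / q
  have hn : n % q + q * m = n := Nat.mod_add_div n q
  have hDm : ((m + 1 : ℕ) : ℝ) ^ s * ((p : ℝ)⁻¹) ^ (m + 1) ≤ D := hD ⟨m, rfl⟩
  have h1 := norm_fwdDiff_iter_mul_le h m (n % q)
  rw [← hq, hn, fwdDiff_iter_const_smul, Pi.smul_apply, ← mahlerCoeff_eq_fwdDiff, norm_smul,
    norm_pow, norm_natCast_p p L, inv_pow, inv_mul_le_iff₀ (by positivity)] at h1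
  have hn1 : (n : ℝ) + 1 ≤ q * ((m + 1 : ℕ) : ℝ) := by
    have : n + 1 ≤ q * (m + 1) := by
      have := Nat.mod_lt n hq0
      rw [Nat.mul_succ]; omega
    exact_mod_cast this
  have h2 : ((n : ℝ) + 1) ^ r ≤ (q : ℝ) ^ s * ((m + 1 : ℕ) : ℝ) ^ s := by
    calc ((n : ℝ) + 1) ^ r ≤ ((n : ℝ) + 1) ^ (s : ℝ) :=
          Real.rpow_le_rpow_of_exponent_le (by linarith [n.cast_nonneg (α := ℝ)]) (Nat.le_ceil r)
      _ = ((n : ℝ) + 1) ^ s := Real.rpow_natCast _ _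
      _ ≤ _ := by rw [← mul_pow]; exact pow_le_pow_left₀ (by positivity) hn1 s
  calc ((n : ℝ) + 1) ^ r * ‖mahlerCoeff f n‖
      ≤ ((q : ℝ) ^ s * ((m + 1 : ℕ) : ℝ) ^ s) * ((p : ℝ) ^ j * ((p : ℝ)⁻¹) ^ m) := by gcongr
    _ = (q : ℝ) ^ s * (p : ℝ) ^ (j + 1) * (((m + 1 : ℕ) : ℝ) ^ s * ((p : ℝ)⁻¹) ^ (m + 1)) := by
        rw [pow_succ (p : ℝ) j, pow_succ (p : ℝ)⁻¹ m]; field_simp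
    _ ≤ _ := by gcongr

end Aux

/-- Under the Amice transform `μ ↦ Σ_n μ(C(z,n)) X^n` identifying the dual of locally
analytic functions with `R^+`, a locally analytic distribution `μ` extends continuously
to `C^r(ℤ_p, L)` if and only if its Amice transform is of order `r` in `R^+`, i.e.
`(n+1)^{-r} |μ(C(z,n))|` is bounded. -/
theorem amice_transform_order_iff_cr_distribution
    (p : ℕ) [Fact p.Prime]
    (L : Type*) [NormedField L] [NormedAlgebra ℚ_[p] L] [CompleteSpace L]
    (r : ℝ) (hr : 0 ≤ r)
    (μ : (ℤ_[p] → L) →ₗ[L] L)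
    (hμ : ∀ f : ℤ_[p] → L, IsLocAn p L f →
      μ f = ∑' n : ℕ, mahlerCoeff f n * μ (binomFn p L n)) :
    (∃ B : ℝ, ∀ f : ℤ_[p] → L, IsLocAn p L f → ‖μ f‖ ≤ B * crNorm r f) ↔
      BddAbove (Set.range fun n : ℕ => ((n : ℝ) + 1) ^ (-r) * ‖μ (binomFn p L n)‖) := by
  have := isUltrametricDist_of_padic p L
  constructor
  · rintro ⟨B, hB⟩
    refine ⟨|B|, ?_⟩
    rintro _ ⟨n, rfl⟩
    have hn : (0 : ℝ) < (n : ℝ) + 1 := by positivity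
    have hle : crNorm r (binomFn p L n) ≤ ((n : ℝ) + 1) ^ r := by
      refine ciSup_le fun m => ?_
      rw [mahlerCoeff_binomFn]
      split_ifs with h
      · simp [h]
      · simpa using (Real.rpow_pos_of_pos hn r).le
    have h : ‖μ (binomFn p L n)‖ ≤ |B| * ((n : ℝ) + 1) ^ r :=
      (hB _ (isLocAn_binomFn n)).trans <|
        mul_le_mul (le_abs_self B) hle (crNorm_nonneg _ _) (abs_nonneg B)
    change ((n : ℝ) + 1) ^ (-r) * ‖μ (binomFn p L n)‖ ≤ |B|
    rwa [Real.rpow_neg hn.le, inv_mul_le_iff₀ (Real.rpow_pos_of_pos hn r), mul_comm]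
  · rintro ⟨C, hC⟩
    have hC' : ∀ n : ℕ, ‖μ (binomFn p L n)‖ ≤ C * ((n : ℝ) + 1) ^ r := fun n => by
      have hn : (0 : ℝ) < (n : ℝ) + 1 := by positivity
      have h : ((n : ℝ) + 1) ^ (-r) * ‖μ (binomFn p L n)‖ ≤ C := hC ⟨n, rfl⟩
      rwa [Real.rpow_neg hn.le, inv_mul_le_iff₀ (Real.rpow_pos_of_pos hn r), mul_comm] at h
    have hC0 : 0 ≤ C := by
      simpa using (norm_nonneg _).trans (hC' 0)
    refine ⟨C, fun f hf => ?_⟩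
    rw [hμ f hf]
    refine IsUltrametricDist.norm_tsum_le_of_forall_le_of_nonneg
      (mul_nonneg hC0 (crNorm_nonneg r f)) fun n => ?_
    rw [norm_mul]
    calc ‖mahlerCoeff f n‖ * ‖μ (binomFn p L n)‖
        ≤ ‖mahlerCoeff f n‖ * (C * ((n : ℝ) + 1) ^ r) := by gcongr; exact hC' n
      _ = C * (((n : ℝ) + 1) ^ r * ‖mahlerCoeff f n‖) := by ring
      _ ≤ C * crNorm r f := by
        gcongr
        exact le_ciSup (hf.bddAbove_crNorm r) n
end
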